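/- arXiv:1701.00768 — 3 statements merged into one kernel-verified Lean document; each statement's English description precedes it below -/
import Mathlib

section
/- Let R be a prime ring which is both left and right Noetherian. Let A ≠ R be a two-sided ideal of R such that A = αR = {α·r : r ∈ R} for some α ∈ R, and let B be another two-sided ideal of R. If AB = B (where AB is the two-sided ideal spanned by products a·b with a ∈ A, b ∈ B), then B = 0. -/
/-!
The hypothesis `AB = B` amounts to `αB = B`, because `Rα ⊆ αR`. Left multiplication by `α` is
therefore a surjective endomorphism of the Noetherian right module `B`, hence an automorphism; let
`φ` be its inverse. Let `b` be a finite tuple generating `B` as a right ideal. As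
`φⁿ(b) = α φⁿ⁺¹(b)`, the left submodules `R φⁿ(b)` of a finite power of `R` form an ascending
chain. When it stabilizes, `φⁿ⁺¹(b) = r φⁿ(b) = r α φⁿ⁺¹(b)` for some `r`, so `1 - rα` annihilates
the tuple `φⁿ⁺¹(b)`. That tuple again generates `B` as a right ideal, so `(1 - rα)B = 0`
(`exists_one_sub_mul_annihilates`). If `B ≠ 0`, primeness gives `1 = rα ∈ A`, contradicting
`A ≠ R`.
-/

/-- A ring that is right Noetherian in the sense of `Rᵐᵒᵖ` is Noetherian as a right module. -/
theorem isNoetherian_mulOpposite_self (R : Type*) [Ring R] [IsNoetherianRing Rᵐᵒᵖ] :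
    IsNoetherian Rᵐᵒᵖ R :=
  isNoetherian_of_linearEquiv
    ({ MulOpposite.opAddEquiv.symm with
        map_smul' := fun _ _ => rfl } : Rᵐᵒᵖ ≃ₗ[Rᵐᵒᵖ] R)

/-- An analogue of Nakayama's lemma for a right ideal `B` with `αB = B`: although `R` need not be
commutative, some element congruent to `1` modulo the left ideal `Rα` annihilates `B`. -/
theorem exists_one_sub_mul_annihilates {R : Type*} [Ring R] [IsNoetherianRing R]
    [IsNoetherianRing Rᵐᵒᵖ] (B : Submodule Rᵐᵒᵖ R) (α : R)
    (hmaps : ∀ b ∈ B, α * b ∈ B) (hsurj : ∀ b ∈ B, ∃ c ∈ B, α * c = b) :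
    ∃ r : R, ∀ b ∈ B, (1 - r * α) * b = 0 := by
  have := isNoetherian_mulOpposite_self R
  let f : B →ₗ[Rᵐᵒᵖ] B := (LinearMap.mulLeft Rᵐᵒᵖ α).restrict hmaps
  have hf : Function.Surjective f := by
    rintro ⟨b, hb⟩
    obtain ⟨c, hc, h⟩ := hsurj b hb
    exact ⟨⟨c, hc⟩, Subtype.ext h⟩
  let e : B ≃ₗ[Rᵐᵒᵖ] B :=
    LinearEquiv.ofBijective f (IsNoetherian.bijective_of_surjective_endomorphism f hf)
  let φ : Module.End Rᵐᵒᵖ B := e.symm.toLinearMap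
  have hφ : ∀ x : B, α * (φ x : R) = x := fun x => congrArg Subtype.val (e.apply_symm_apply x)
  obtain ⟨s, hs⟩ : (⊤ : Submodule Rᵐᵒᵖ B).FG := IsNoetherian.noetherian _
  let c : ℕ → (s → R) := fun n i => ((φ ^ n) i.1 : B)
  have hc : ∀ n, c n = α • c (n + 1) := by
    intro n
    funext i
    simp only [c, Pi.smul_apply, smul_eq_mul, pow_succ', Module.End.mul_apply, hφ]
  let T : ℕ →o Submodule R (s → R) :=
    ⟨fun n => R ∙ c n, monotone_nat_of_le_succ fun n => by
      rw [Submodule.span_singleton_le_iff_mem, Submodule.mem_span_singleton]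
      exact ⟨α, (hc n).symm⟩⟩
  obtain ⟨n, hn⟩ := monotone_stabilizes_iff_noetherian.2 (inferInstance : IsNoetherian R (s → R)) T
  have hmem : c (n + 1) ∈ R ∙ c n := by
    have h : R ∙ c n = R ∙ c (n + 1) := hn (n + 1) n.le_succ
    rw [h]
    exact Submodule.mem_span_singleton_self _
  obtain ⟨r, hr⟩ := Submodule.mem_span_singleton.1 hmem
  refine ⟨r, fun b hb => ?_⟩
  -- The right-linear map `x ↦ (1 - rα) φⁿ⁺¹(x)` kills the generators of `B`, so it is zero.
  let ψ : B →ₗ[Rᵐᵒᵖ] R :=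
    LinearMap.mulLeft Rᵐᵒᵖ (1 - r * α) ∘ₗ B.subtype ∘ₗ (φ ^ (n + 1))
  have hψ : ψ = 0 := by
    refine LinearMap.ext_on hs fun x hx => ?_
    have h := congrFun hr ⟨x, hx⟩
    rw [hc n] at h
    change (1 - r * α) * c (n + 1) ⟨x, hx⟩ = 0
    rw [sub_mul, one_mul, sub_eq_zero, mul_assoc]
    exact h.symm
  have hsurjφ : Function.Surjective (φ ^ (n + 1)) := by
    rw [Module.End.coe_pow]
    exact e.symm.surjective.iterate (n + 1)
  obtain ⟨x, hx⟩ := hsurjφ ⟨b, hb⟩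
  have h : (1 - r * α) * (((φ ^ (n + 1)) x : B) : R) = 0 := LinearMap.congr_fun hψ x
  rwa [hx] at h

/-- (Passman) Let `R` be a prime ring which is both left and right Noetherian.  Let
`A ≠ R` be a two-sided ideal of `R` with `A = αR` for some `α ∈ R`, and let `B` be
another two-sided ideal of `R`.  If `AB = B` (the two-sided ideal spanned by the
products `a·b`, `a ∈ A`, `b ∈ B`), then `B = 0`. -/
theorem prime_noetherian_principal_eq_mul_imp_bot
    (R : Type*) [Ring R] [Nontrivial R]
    (hprime : ∀ a b : R, (∀ r : R, a * r * b = 0) → a = 0 ∨ b = 0)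
    [IsNoetherianRing R] [IsNoetherianRing Rᵐᵒᵖ]
    (A B : Ideal R)
    (hA2 : ∀ a ∈ A, ∀ r : R, a * r ∈ A)
    (hB2 : ∀ b ∈ B, ∀ r : R, b * r ∈ B)
    (hAne : A ≠ ⊤)
    (α : R) (hAgen : (A : Set R) = Set.range (fun r : R => α * r))
    (hAB : Ideal.span {x : R | ∃ a ∈ A, ∃ b ∈ B, x = a * b} = B) :
    B = ⊥ := by
  have hA : ∀ a, a ∈ A ↔ ∃ r, α * r = a := fun a => by
    rw [← SetLike.mem_coe, hAgen, Set.mem_range]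
  have hα : α ∈ A := (hA α).2 ⟨1, mul_one α⟩
  have hsurj : ∀ b ∈ B, ∃ c ∈ B, α * c = b := by
    intro b hb
    rw [← hAB] at hb
    induction hb using Submodule.span_induction with
    | mem x hx =>
      obtain ⟨a, ha, b, hb, rfl⟩ := hx
      obtain ⟨t, rfl⟩ := (hA a).1 ha
      exact ⟨t * b, B.mul_mem_left t hb, (mul_assoc _ _ _).symm⟩
    | zero => exact ⟨0, B.zero_mem, mul_zero α⟩
    | add x y _ _ hx hy =>
      obtain ⟨c, hc, rfl⟩ := hx
      obtain ⟨d, hd, rfl⟩ := hy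
      exact ⟨c + d, B.add_mem hc hd, mul_add _ _ _⟩
    | smul r x _ hx =>
      obtain ⟨c, hc, rfl⟩ := hx
      obtain ⟨t, ht⟩ := (hA (r * α)).1 (A.mul_mem_left r hα)
      exact ⟨t * c, B.mul_mem_left t hc, by rw [smul_eq_mul, ← mul_assoc, ht, mul_assoc]⟩
  let B' : Submodule Rᵐᵒᵖ R :=
    { B.toAddSubmonoid with smul_mem' := fun r b hb => hB2 b hb r.unop }
  obtain ⟨r, hr⟩ := exists_one_sub_mul_annihilates B' α (fun b hb => B.mul_mem_left α hb) hsurj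
  refine (Submodule.eq_bot_iff B).2 fun b hb => ?_
  refine (hprime (1 - r * α) b fun t => ?_).resolve_left fun h => hAne ?_
  · rw [mul_assoc]
    exact hr _ (B.mul_mem_left t hb)
  · rw [Ideal.eq_top_iff_one, sub_eq_zero.1 h]
    exact A.mul_mem_left r hα
end

section
/- Let R be a prime ring which is both left and right Noetherian. Let A ≠ R be a two-sided ideal of R such that A = αR = {α·r : r ∈ R} for some α ∈ R, and let B be a prime two-sided ideal of R with B strictly contained in A. Then B = 0. -/
/-- From `Rα ⊆ αR` one gets `R αⁿ ⊆ αⁿ R`. -/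
theorem exists_mul_pow_eq {R : Type*} [Ring R] {α : R}
    (hα : ∀ r : R, ∃ s, r * α = α * s) (n : ℕ) (r : R) : ∃ s, r * α ^ n = α ^ n * s := by
  induction n with
  | zero => exact ⟨r, by simp⟩
  | succ n ih =>
    obtain ⟨s, hs⟩ := ih
    obtain ⟨t, ht⟩ := hα s
    exact ⟨t, by rw [pow_succ, ← mul_assoc, hs, mul_assoc, ht, mul_assoc]⟩

/-- In a right Noetherian ring, if `Rα ⊆ αR` and `P` is a prime ideal not containing `α`, then `α`
is left cancellable modulo `P`. -/
theorem mem_of_mul_mem {R : Type*} [Ring R] [IsNoetherianRing Rᵐᵒᵖ] {α : R}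
    (hα : ∀ r : R, ∃ s, r * α = α * s) (P : Ideal R)
    (hP2 : ∀ b ∈ P, ∀ r : R, b * r ∈ P) (hPne : P ≠ ⊤)
    (hP : ∀ x y : R, (∀ r : R, x * r * y ∈ P) → x ∈ P ∨ y ∈ P)
    (hαP : α ∉ P) {c : R} (hc : α * c ∈ P) : c ∈ P := by
  have hright : ∀ x, x * α ∈ P → x ∈ P := fun x hx => by
    refine (hP x α fun r => ?_).resolve_right hαP
    obtain ⟨s, hs⟩ := hα r
    rw [mul_assoc, hs, ← mul_assoc]
    exact hP2 _ hx s
  have hpow : ∀ n, α ^ n ∉ P := by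
    intro n
    induction n with
    | zero => rwa [pow_zero, ← Ideal.eq_top_iff_one]
    | succ n ih => exact fun h => ih (hright _ (by rwa [← pow_succ]))
  have hN : IsNoetherian Rᵐᵒᵖ R := isNoetherian_mulOpposite_self R
  -- The ascending chain of right ideals `{x | αⁿ x ∈ P}`.
  let I : ℕ →o Submodule Rᵐᵒᵖ R :=
    { toFun := fun n =>
        { carrier := {x | α ^ n * x ∈ P}
          add_mem' := fun {x y} hx hy => by
            simpa only [Set.mem_ofPred_eq, mul_add] using P.add_mem hx hy
          zero_mem' := by simp
          smul_mem' := fun r x hx => by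
            simpa only [Set.mem_ofPred_eq, MulOpposite.smul_eq_mul_unop, mul_assoc]
              using hP2 _ hx r.unop }
      monotone' := monotone_nat_of_le_succ fun n x (hx : α ^ n * x ∈ P) => by
        change α ^ (n + 1) * x ∈ P
        rw [pow_succ', mul_assoc]
        exact P.mul_mem_left α hx }
  obtain ⟨n, hn⟩ := monotone_stabilizes_iff_noetherian.mpr hN I
  refine (hP c (α ^ n) fun r => ?_).resolve_right (hpow n)
  obtain ⟨t, ht⟩ := exists_mul_pow_eq hα n (c * r)
  have h1 : t ∈ I (n + 1) := by
    change α ^ (n + 1) * t ∈ P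
    rw [pow_succ', mul_assoc, ← ht, ← mul_assoc, ← mul_assoc]
    exact hP2 _ (hP2 _ hc r) _
  rw [← hn (n + 1) n.le_succ] at h1
  rw [ht]
  exact h1


/-- (Passman) Let `R` be a prime ring which is both left and right Noetherian.  Let
`A ≠ R` be a two-sided ideal of `R` with `A = αR` for some `α ∈ R`, and let `B` be a
prime two-sided ideal of `R` strictly contained in `A`.  Then `B = 0`. -/
theorem prime_noetherian_principal_prime_lt_imp_bot
    (R : Type*) [Ring R] [Nontrivial R]
    (hprime : ∀ a b : R, (∀ r : R, a * r * b = 0) → a = 0 ∨ b = 0)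
    [IsNoetherianRing R] [IsNoetherianRing Rᵐᵒᵖ]
    (A B : Ideal R)
    (hA2 : ∀ a ∈ A, ∀ r : R, a * r ∈ A)
    (hB2 : ∀ b ∈ B, ∀ r : R, b * r ∈ B)
    (hAne : A ≠ ⊤)
    (α : R) (hAgen : (A : Set R) = Set.range (fun r : R => α * r))
    (hBne : B ≠ ⊤)
    (hBprime : ∀ x y : R, (∀ r : R, x * r * y ∈ B) → x ∈ B ∨ y ∈ B)
    (hBA : B < A) :
    B = ⊥ := by
  have hα : ∀ r : R, ∃ s, r * α = α * s := fun r => by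
    have hαA : α ∈ (A : Set R) := hAgen ▸ ⟨1, mul_one α⟩
    have h : r * α ∈ (A : Set R) := A.mul_mem_left r hαA
    rw [hAgen] at h
    obtain ⟨s, hs⟩ := h
    exact ⟨s, hs.symm⟩
  have hαA : α ∈ A := by
    rw [← SetLike.mem_coe, hAgen]
    exact ⟨1, mul_one α⟩
  have hαB : α ∉ B := fun h => hBA.not_ge fun x hx => by
    rw [← SetLike.mem_coe, hAgen] at hx
    obtain ⟨r, rfl⟩ := hx
    exact hB2 α h r
  have hreg : ∀ c : R, α * c = 0 → c = 0 := fun c hc => by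
    have h := mem_of_mul_mem hα (⊥ : Ideal R) (by simp) bot_ne_top (by simpa using hprime)
      (fun h => hαB (by rw [Ideal.mem_bot.mp h]; exact B.zero_mem)) (c := c) (by simpa using hc)
    simpa using h
  have hregpow : ∀ (n : ℕ) (c : R), α ^ n * c = 0 → c = 0 := by
    intro n
    induction n with
    | zero => simp
    | succ n ih => exact fun c hc => hreg c (ih _ (by rwa [← mul_assoc, ← pow_succ]))
  -- Division by `α` on `B`.
  have hdiv : ∀ b : B, ∃ b' : B, (b : R) = α * b' := fun b => by
    have h : (b : R) ∈ (A : Set R) := hBA.le b.2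
    rw [hAgen] at h
    obtain ⟨c, hc : α * c = b⟩ := h
    exact ⟨⟨c, mem_of_mul_mem hα B hB2 hBne hBprime hαB (hc.symm ▸ b.2)⟩, hc.symm⟩
  choose β hβ using hdiv
  have hβpow : ∀ (n : ℕ) (b : B), (b : R) = α ^ n * (β^[n] b : B) := by
    intro n
    induction n with
    | zero => simp
    | succ n ih =>
      intro b
      rw [Function.iterate_succ_apply', pow_succ, mul_assoc, ← hβ]
      exact ih b
  have hN : IsNoetherian Rᵐᵒᵖ R := isNoetherian_mulOpposite_self R
  let B' : Submodule Rᵐᵒᵖ R :=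
    { carrier := B
      add_mem' := B.add_mem
      zero_mem' := B.zero_mem
      smul_mem' := fun r x hx => hB2 x hx r.unop }
  obtain ⟨k, b, hb⟩ := Submodule.fg_iff_exists_fin_generating_family.mp (hN.noetherian B')
  have hbB : ∀ i, b i ∈ B := fun i => by
    have : b i ∈ B' := hb ▸ Submodule.subset_span ⟨i, rfl⟩
    exact this
  let v : ℕ → Fin k → R := fun n i => (β^[n] ⟨b i, hbB i⟩ : B)
  have hv : ∀ n, v n = α • v (n + 1) := fun n => by
    funext i
    simp only [v, Pi.smul_apply, smul_eq_mul, Function.iterate_succ_apply']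
    exact hβ _
  let S : ℕ →o Submodule R (Fin k → R) :=
    { toFun := fun n => Submodule.span R {v n}
      monotone' := monotone_nat_of_le_succ fun n => by
        rw [Submodule.span_singleton_le_iff_mem, hv n]
        exact Submodule.smul_mem _ _ (Submodule.mem_span_singleton_self _) }
  obtain ⟨n, hn⟩ := monotone_stabilizes_iff_noetherian.mpr
    (inferInstance : IsNoetherian R (Fin k → R)) S
  have hmem : v (n + 1) ∈ S n := by
    rw [hn (n + 1) n.le_succ]
    exact Submodule.mem_span_singleton_self _
  obtain ⟨r, hr⟩ := Submodule.mem_span_singleton.mp hmem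
  have hkill : ∀ i, (1 - r * α) * v (n + 1) i = 0 := fun i => by
    have h := congrFun hr i
    rw [hv n] at h
    simp only [Pi.smul_apply, smul_eq_mul] at h
    rw [sub_mul, one_mul, mul_assoc, h, sub_self]
  -- The entries of `v (n + 1)` generate `B` on the right, since their products with `αⁿ⁺¹` do.
  have hkillB : ∀ x ∈ B, (1 - r * α) * x = 0 := fun x hx => by
    have hx' : α ^ (n + 1) * x ∈ B' := B.mul_mem_left _ hx
    rw [← hb] at hx'
    obtain ⟨s, hs⟩ := (Submodule.mem_span_range_iff_exists_fun Rᵐᵒᵖ).mp hx'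
    have hxs : x = ∑ i, v (n + 1) i * (s i).unop := by
      refine sub_eq_zero.mp (hregpow (n + 1) _ ?_)
      rw [mul_sub, ← hs, Finset.mul_sum, sub_eq_zero]
      refine Finset.sum_congr rfl fun i _ => ?_
      rw [MulOpposite.smul_eq_mul_unop, ← mul_assoc, ← hβpow (n + 1) ⟨b i, hbB i⟩]
    rw [hxs, Finset.mul_sum]
    exact Finset.sum_eq_zero fun i _ => by rw [← mul_assoc, hkill, zero_mul]
  refine (Submodule.eq_bot_iff _).mpr fun x hx => ?_
  refine (hprime (1 - r * α) x fun s => ?_).resolve_left fun h => hAne ?_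
  · rw [mul_assoc]
    exact hkillB _ (B.mul_mem_left s hx)
  · rw [Ideal.eq_top_iff_one, sub_eq_zero.mp h]
    exact A.mul_mem_left r hαA
end

section
/- Let K be a field of characteristic 0 and G a group. Then the group algebra KG is a principal ideal ring if and only if either G is finite, or there exists a finite normal subgroup N of G such that the quotient G/N is infinite cyclic (isomorphic to ℤ). -/
/-!
Write `R = K[G]` and let `ω` be its augmentation ideal.

**Necessity.** Suppose `R` is a left principal ideal ring and `G` is infinite. Let `J` be the kernel
of a ring homomorphism out of `R` that is trivial on infinitely many elements of `G`. A nonzero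
element of `R` has finite support, so it is not fixed by infinitely many left translations; hence
`J` has zero right annihilator. If `J = R x`, a Fitting-type argument in the Noetherian ring `R`
(`eq_zero_of_mul_eq_zero`) shows that `x` also has zero *left* annihilator, so that a relation
`x = w x` forces `w = 1` (`eq_zero_of_mul_generator_eq_zero`).

Apply this to `ω = R x`. If `x ∈ ω x = ω²` then `1 ∈ ω`, which is absurd, so some `K`-linear form
`D` kills `ω²` but not `x`, and `g ↦ D (g - 1)` is a nonzero homomorphism from `G` to `(K, +)`. The
group `G` is generated by the support of `x`, so the image is a nonzero finitely generated
torsion-free abelian group, and `G` surjects onto `ℤ` by some `φ` (`exists_surjective_int`).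

Let `N = ker φ`, let `f : R → K[ℤ]` be the induced map, and let `*` be the standard involution. If
`N` is infinite, write `ker f = R y`. As `y* ∈ ker f ⊆ ω`, we have `y* = z x`; since `K[ℤ]` is a
domain and `f x ≠ 0`, `z ∈ ker f`. Then `z* = s y` for some `s`, so `y = x* s y`, whence
`x* s = 1`, contradicting `x* ∈ ω`. So `N` is finite (`finite_ker`).

**Sufficiency.** By Maschke's theorem `K[G]` is semisimple for finite `G`, so every left ideal is
generated by an idempotent. If `N = ker φ` is finite with `φ : G → ℤ` surjective, then `A = K[N]` is
semisimple and `K[G]` is graded by `ℤ` with degree-zero part `A` and an invertible element of degree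
one. For a left ideal `I`, let `I_d` be its elements supported in degrees `[-d, 0]` and `L_d ⊆ A`
the left ideal of their degree-zero components. By semisimplicity the projections `I_d → L_d` have a
compatible `A`-linear section, which extends to all of `A` and hence has the form `a ↦ a h`. If the
chain `L_d` stabilises at `A e`, subtracting multiples of `e h` and shifting degrees shows
`I = K[G] e h` (`isPrincipalIdealRing_of_filtration`).
-/

namespace GroupAlgebraPIR

/-! ### Regularity of generators of two-sided ideals -/

/-- In a left Noetherian ring, let the left ideal `R x` be two-sided (`hcomm`). If `x` has zero right
annihilator, it has zero left annihilator. -/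
theorem eq_zero_of_mul_eq_zero {R : Type*} [Ring R] [IsNoetherianRing R] {x : R}
    (hcomm : ∀ r, ∃ r', x * r = r' * x) (hx : ∀ a, x * a = 0 → a = 0) {a : R}
    (ha : a * x = 0) : a = 0 := by
  have hcomm' : ∀ n r, ∃ r', x ^ n * r = r' * x ^ n := by
    intro n
    induction n with
    | zero => exact fun r => ⟨r, by simp⟩
    | succ n ih =>
      intro r
      obtain ⟨s, hs⟩ := hcomm r
      obtain ⟨t, ht⟩ := ih s
      exact ⟨t, by rw [pow_succ, mul_assoc, hs, ← mul_assoc, ht, mul_assoc]⟩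
  have hx' : ∀ n a, x ^ n * a = 0 → a = 0 := by
    intro n
    induction n with
    | zero => exact fun a h => by simpa using h
    | succ n ih => exact fun a h => ih a (hx _ (by rw [← mul_assoc, ← pow_succ', h]))
  -- `A n` is the left annihilator of `x ^ n`.
  let A : ℕ →o Ideal R :=
    { toFun n := LinearMap.ker (LinearMap.toSpanSingleton R R (x ^ n))
      monotone' := by
        intro m n hmn b hb
        simp only [LinearMap.mem_ker, LinearMap.toSpanSingleton_apply, smul_eq_mul] at hb ⊢
        obtain ⟨k, rfl⟩ := Nat.exists_eq_add_of_le hmn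
        rw [pow_add, ← mul_assoc, hb, zero_mul] }
  have hA : ∀ n b, b ∈ A n ↔ b * x ^ n = 0 := fun n b => Iff.rfl
  obtain ⟨n, hn⟩ := monotone_stabilizes_iff_noetherian.mpr ‹IsNoetherianRing R› A
  have key : ∀ b ∈ A (n + 1), b = 0 := by
    intro b hb
    rw [← hn (n + 1) (by omega), hA] at hb
    -- Write `x ^ n * b = c * x ^ n`; then `c` kills `x ^ (2 * n)`, hence already `x ^ n`.
    obtain ⟨c, hc⟩ := hcomm' n b
    have hc' : c ∈ A (n + n) := by
      rw [hA, pow_add, ← mul_assoc, ← hc, mul_assoc, hb, mul_zero]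
    rw [← hn (n + n) (by omega), hA, ← hc] at hc'
    exact hx' n b hc'
  exact key a (by rw [hA, pow_succ', ← mul_assoc, ha, zero_mul])

variable {K G : Type*} [Field K] [Group G]

open MonoidAlgebra

/-- If the kernel of a ring homomorphism `f` from `K[G]` is `K[G] x`, and `f` is trivial on
infinitely many group elements, then `x` has zero left annihilator. -/
theorem eq_zero_of_mul_generator_eq_zero [IsNoetherianRing (MonoidAlgebra K G)]
    {S : Type*} [Ring S] (f : MonoidAlgebra K G →+* S)
    (hf : {g : G | f (of K G g) = 1}.Infinite) {x : MonoidAlgebra K G}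
    (hx : ∀ z, f z = 0 ↔ ∃ r, z = r * x) {a : MonoidAlgebra K G} (ha : a * x = 0) : a = 0 := by
  have hfx : f x = 0 := (hx x).2 ⟨1, (one_mul x).symm⟩
  refine eq_zero_of_mul_eq_zero (x := x) (fun r => (hx _).1 (by simp [hfx])) (fun b hb => ?_) ha
  by_contra hb0
  obtain ⟨h, hh⟩ : ∃ h, b.coeff h ≠ 0 := by
    by_contra! H
    exact hb0 (by ext h; simpa using H h)
  -- `b` is invariant under left translation by `g`, so its finite support contains all `g⁻¹ * h`.
  have hinv : ∀ g ∈ {g : G | f (of K G g) = 1}, g⁻¹ * h ∈ (b.coeff.support : Set G) := by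
    intro g hg
    obtain ⟨r, hr⟩ := (hx (of K G g - 1)).1 (by rw [map_sub, map_one, hg.out, sub_self])
    have h1 : of K G g * b = b := by
      have : (of K G g - 1) * b = 0 := by rw [hr, mul_assoc, hb, mul_zero]
      rwa [sub_mul, one_mul, sub_eq_zero] at this
    have h2 := congr(MonoidAlgebra.coeff $h1 h)
    simp only [of_apply, coeff_single_mul_apply, one_mul] at h2
    simpa [h2] using hh
  refine hf (Set.Finite.of_finite_image (f := fun g => g⁻¹ * h)
    (b.coeff.support.finite_toSet.subset (Set.image_subset_iff.2 hinv)) ?_)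
  intro g _ g' _ hgg
  simpa using hgg

/-! ### Construction of a surjection onto the integers -/

variable (K G) in
/-- The augmentation of the group algebra: the sum of the coefficients. -/
noncomputable def aug : MonoidAlgebra K G →ₐ[K] K := MonoidAlgebra.lift K K G 1

@[simp] theorem aug_single (g : G) (c : K) : aug K G (single g c) = c := by simp [aug]

/-- If the augmentation ideal is `K[G] x`, then `G` is generated by the support of `x`. -/
theorem fg_of_augmentation_generator {x : MonoidAlgebra K G}
    (hx : ∀ z, aug K G z = 0 ↔ ∃ r, z = r * x) : Group.FG G := by
  classical
  have hax : aug K G x = 0 := (hx x).2 ⟨1, (one_mul x).symm⟩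
  let H := Subgroup.closure (x.coeff.support : Set G)
  -- Passing to left cosets of `H` kills the augmentation ideal, so all left cosets coincide.
  let Φ : MonoidAlgebra K G → MonoidAlgebra K (G ⧸ H) := MonoidAlgebra.mapDomain QuotientGroup.mk
  have hxs : ∑ h ∈ x.coeff.support, single h (x.coeff h) = x := sum_coeff_single x
  have hΦ : ∀ r, Φ (r * x) = 0 := by
    intro r
    induction r using MonoidAlgebra.induction_linear with
    | zero => simp [Φ]
    | add r s hr hs => rw [add_mul]; simp only [Φ, mapDomain_add] at *; rw [hr, hs, add_zero]
    | single g c =>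
      have h1 : ∀ h ∈ x.coeff.support, Φ (single g c * single h (x.coeff h)) =
          single (QuotientGroup.mk g) (c * x.coeff h) := by
        intro h hh
        have : (QuotientGroup.mk (g * h) : G ⧸ H) = QuotientGroup.mk g := by
          rw [QuotientGroup.mk_mul_of_mem]
          exact Subgroup.subset_closure hh
        simp [Φ, this]
      have h2 : Φ (single g c * x) = ∑ h ∈ x.coeff.support,
          Φ (single g c * single h (x.coeff h)) := by
        conv_lhs => rw [← hxs, Finset.mul_sum]
        exact map_sum (⟨⟨Φ, mapDomain_zero _⟩, mapDomain_add _⟩ : _ →+ _) _ _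
      have h3 : ∑ h ∈ x.coeff.support, x.coeff h = 0 := by
        rw [← hax, ← congrArg (aug K G) hxs, map_sum]
        simp
      rw [h2, Finset.sum_congr rfl h1]
      ext q
      simp only [coeff_sum, coeff_single, ← Finsupp.single_finsetSum, ← Finset.mul_sum, h3]
      simp
  refine ⟨⟨x.coeff.support, ?_⟩⟩
  rw [eq_top_iff]
  intro g _
  obtain ⟨r, hr⟩ := (hx (single g 1 - 1)).1 (by simp)
  have h1 := hΦ r
  rw [← hr, sub_eq_add_neg, one_def, ← single_neg] at h1
  simp only [Φ, mapDomain_add, mapDomain_single] at h1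
  rw [single_neg, ← sub_eq_add_neg, sub_eq_zero, single_left_inj one_ne_zero, eq_comm,
    QuotientGroup.eq] at h1
  simpa using h1

/-- The augmentation ideal is not idempotent, which produces a nonzero homomorphism from `G` to
`(K, +)`; its image is free abelian of positive finite rank. -/
theorem exists_surjective_int [CharZero K] [IsPrincipalIdealRing (MonoidAlgebra K G)] [Infinite G]
    {x : MonoidAlgebra K G} (hx : ∀ z, aug K G z = 0 ↔ ∃ r, z = r * x) :
    ∃ φ : G →* Multiplicative ℤ, Function.Surjective φ := by
  have hreg : ∀ a : MonoidAlgebra K G, a * x = 0 → a = 0 := fun a ha =>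
    eq_zero_of_mul_generator_eq_zero (aug K G : MonoidAlgebra K G →+* K)
      (by simpa using Set.infinite_univ) hx ha
  -- `W` is the square of the augmentation ideal.
  let W : Submodule K (MonoidAlgebra K G) :=
    (LinearMap.ker (aug K G).toLinearMap).map (LinearMap.mulRight K x)
  have hW : ∀ z, z ∈ W ↔ ∃ w, aug K G w = 0 ∧ w * x = z := by simp [W]
  have hxW : x ∉ W := by
    rw [hW]
    rintro ⟨w, hw, hwx⟩
    have : 1 - w = 0 := hreg _ (by rw [sub_mul, hwx, one_mul, sub_self])
    have := congrArg (aug K G) this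
    simp [hw] at this
  obtain ⟨D, hDx, hD⟩ := Submodule.exists_le_ker_of_notMem hxW
  have hD' : ∀ w, aug K G w = 0 → D (w * x) = 0 := fun w hw => hD ((hW _).2 ⟨w, hw, rfl⟩)
  -- Additivity: `gh - 1 = (g - 1)(h - 1) + (g - 1) + (h - 1)`, and `D` vanishes on `W`.
  let lam : Additive G →+ K :=
    { toFun g := D (of K G g.toMul - 1)
      map_zero' := by simp [one_def]
      map_add' := by
        intro g h
        obtain ⟨r, hr⟩ := (hx (of K G h.toMul - 1)).1 (by simp)
        have h1 : D ((of K G g.toMul - 1) * (of K G h.toMul - 1)) = 0 := by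
          rw [hr, ← mul_assoc]
          exact hD' _ (by simp)
        have h2 : of K G (g + h).toMul - 1 = (of K G g.toMul - 1) * (of K G h.toMul - 1) +
            (of K G g.toMul - 1) + (of K G h.toMul - 1) := by
          rw [toMul_add, map_mul]; noncomm_ring
        rw [h2, map_add, map_add, h1, zero_add] }
  have hlam : ∀ g, lam g = D (of K G g.toMul - 1) := fun g => rfl
  have hne : ∃ g, lam g ≠ 0 := by
    by_contra! H
    have h1 : ∀ z, D z = D (algebraMap K _ (aug K G z)) := by
      intro z
      induction z using MonoidAlgebra.induction_linear with
      | zero => simp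
      | add y z hy hz => simp only [map_add, hy, hz]
      | single g c =>
        have h2 := H (.ofMul g)
        rw [hlam, map_sub, sub_eq_zero] at h2
        have h3 : (single g c : MonoidAlgebra K G) = c • of K G g := by simp
        rw [h3, map_smul, map_smul, Algebra.algebraMap_eq_smul_one, map_smul]
        simp only [toMul_ofMul, of_apply] at h2
        simp [h2]
    apply hDx
    rw [h1, (hx x).2 ⟨1, (one_mul x).symm⟩]
    simp
  have := fg_of_augmentation_generator hx
  have : Module.Finite ℤ lam.range := by
    rw [Module.Finite.iff_addGroup_fg]
    infer_instance
  obtain ⟨g, hg⟩ := hne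
  let v : lam.range := ⟨lam g, g, rfl⟩
  have hv : v ≠ 0 := fun h => hg congr(($h : K))
  let b := Module.Free.chooseBasis ℤ lam.range
  have : Nontrivial lam.range := ⟨v, 0, hv⟩
  obtain ⟨i⟩ := b.index_nonempty
  refine ⟨AddMonoidHom.toMultiplicativeRight
    ((b.coord i).toAddMonoidHom.comp lam.rangeRestrict), ?_⟩
  intro n
  obtain ⟨g, hg⟩ := lam.rangeRestrict_surjective (n.toAdd • b i)
  refine ⟨g.toMul, ?_⟩
  simp [hg]

/-! ### Finiteness of the kernel -/

/-- The standard involution `g ↦ g⁻¹` of the group algebra, as a homomorphism to the opposite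
algebra. -/
noncomputable def inv : MonoidAlgebra K G →ₐ[K] (MonoidAlgebra K G)ᵐᵒᵖ :=
  MonoidAlgebra.lift K (MonoidAlgebra K G)ᵐᵒᵖ G
    { toFun g := .op (of K G g⁻¹)
      map_one' := by simp [one_def]
      map_mul' a b := by rw [← MulOpposite.op_mul, ← map_mul, mul_inv_rev] }


@[simp] theorem inv_single (g : G) (c : K) :
    inv (single g c : MonoidAlgebra K G) = .op (single g⁻¹ c) := by
  simp [inv, ← MulOpposite.op_smul]

theorem inv_inv (z : MonoidAlgebra K G) : (inv (inv z).unop).unop = z := by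
  induction z using MonoidAlgebra.induction_linear with
  | zero => simp
  | add y z hy hz => simp [hy, hz]
  | single g c => simp

theorem aug_inv (z : MonoidAlgebra K G) : aug K G (inv z).unop = aug K G z := by
  induction z using MonoidAlgebra.induction_linear with
  | zero => simp
  | add y z hy hz => simp [hy, hz]
  | single g c => simp

theorem mapDomainRingHom_inv {H : Type*} [Group H] (φ : G →* H) (z : MonoidAlgebra K G) :
    mapDomainRingHom K φ (inv z).unop = (inv (mapDomainRingHom K φ z)).unop := by
  induction z using MonoidAlgebra.induction_linear with
  | zero => simp
  | add y z hy hz => simp only [map_add, MulOpposite.unop_add, hy, hz]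
  | single g c => simp

theorem exists_generator [IsPrincipalIdealRing (MonoidAlgebra K G)] {S : Type*} [Ring S]
    (f : MonoidAlgebra K G →+* S) : ∃ x, ∀ z, f z = 0 ↔ ∃ r, z = r * x := by
  obtain ⟨x, hx⟩ := (IsPrincipalIdealRing.principal (RingHom.ker f)).principal
  refine ⟨x, fun z => ?_⟩
  rw [← RingHom.mem_ker, hx, Submodule.mem_span_singleton]
  simp [eq_comm]

/-- The kernel of any surjection from `G` onto `ℤ` is finite when `K[G]` is a principal ideal ring. -/
theorem finite_ker [IsPrincipalIdealRing (MonoidAlgebra K G)]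
    {x : MonoidAlgebra K G} (hx : ∀ z, aug K G z = 0 ↔ ∃ r, z = r * x)
    {φ : G →* Multiplicative ℤ} (hφ : Function.Surjective φ) : Finite φ.ker := by
  by_contra hfin
  let f := mapDomainRingHom K φ
  obtain ⟨y, hy⟩ := exists_generator f
  have hinf : {g : G | f (of K G g) = 1}.Infinite := by
    have : {g : G | f (of K G g) = 1} = (φ.ker : Set G) := by
      ext g
      simp [f, one_def, single_left_inj, MonoidHom.mem_ker]
    rw [this]
    exact fun h => hfin h
  have hfy : f y = 0 := (hy y).2 ⟨1, (one_mul y).symm⟩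
  have hax : aug K G x = 0 := (hx x).2 ⟨1, (one_mul x).symm⟩
  have hfx : f x ≠ 0 := by
    intro h
    obtain ⟨g, hg⟩ := hφ (.ofAdd 1)
    obtain ⟨r, hr⟩ := (hx (of K G g - 1)).1 (by simp)
    have h1 := congrArg f hr
    rw [map_mul, h, mul_zero, map_sub, map_one, sub_eq_zero] at h1
    simp only [f, of_apply, mapDomainRingHom_apply, mapDomain_single, one_def, hg] at h1
    rw [single_left_inj one_ne_zero] at h1
    exact absurd h1 (by decide)
  have haug : ∀ z, f z = 0 → aug K G z = 0 := by
    have : ∀ z, aug K _ (f z) = aug K G z := by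
      intro z
      induction z using MonoidAlgebra.induction_linear with
      | zero => simp
      | add y z hy hz => simp only [map_add, hy, hz]
      | single g c => simp [f]
    intro z hz
    rw [← this, hz, map_zero]
  have hfy' : f (inv y).unop = 0 := by
    simp only [f] at hfy ⊢
    rw [mapDomainRingHom_inv, hfy]; simp
  obtain ⟨z, hz⟩ := (hx _).1 (haug _ hfy')
  have hfz : f z = 0 := by
    rw [hz, map_mul] at hfy'
    exact (mul_eq_zero.1 hfy').resolve_right hfx
  have hfz' : f (inv z).unop = 0 := by
    simp only [f] at hfz ⊢
    rw [mapDomainRingHom_inv, hfz]; simp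
  obtain ⟨s, hs⟩ := (hy _).1 hfz'
  have h1 : y = (inv x).unop * s * y := by
    rw [mul_assoc, ← hs, ← MulOpposite.unop_mul, ← map_mul, ← hz, inv_inv]
  have h2 : 1 - (inv x).unop * s = 0 := by
    apply eq_zero_of_mul_generator_eq_zero f hinf hy
    rw [sub_mul, one_mul, ← h1, sub_self]
  have h3 := congrArg (aug K G) h2
  simp [aug_inv, hax] at h3

/-! ### Sufficiency -/

/-- An abstract form of the argument that skew Laurent rings over a semisimple ring `R` are left
principal ideal rings. In the application, `F d` consists of the elements supported in degrees
`[-d, 0]`, `c` takes the degree-zero component, and `t` is a unit of degree one. -/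
theorem isPrincipalIdealRing_of_filtration {R S : Type*} [Ring R] [IsSemisimpleRing R] [Ring S]
    (i : R →+* S) (c : S →+ R) (hc : ∀ r x, c (i r * x) = r * c x)
    (F : ℕ →o AddSubgroup S) (hF : ∀ d r x, x ∈ F d → i r * x ∈ F d) (t : Sˣ)
    (h0 : ∀ x ∈ F 0, c x = 0 → x = 0) (hs : ∀ d, ∀ x ∈ F (d + 1), c x = 0 → t * x ∈ F d)
    (hex : ∀ x : S, ∃ (u : Sˣ) (d : ℕ), u * x ∈ F d) : IsPrincipalIdealRing S := by
  refine ⟨fun I => ?_⟩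
  let L : ℕ →o Ideal R :=
    { toFun d :=
        { carrier := {a | ∃ x ∈ I, x ∈ F d ∧ c x = a}
          zero_mem' := ⟨0, I.zero_mem, zero_mem _, map_zero c⟩
          add_mem' := by
            rintro _ _ ⟨x, hx, hx', rfl⟩ ⟨y, hy, hy', rfl⟩
            exact ⟨x + y, I.add_mem hx hy, add_mem hx' hy', map_add c x y⟩
          smul_mem' := by
            rintro r _ ⟨x, hx, hx', rfl⟩
            exact ⟨i r * x, I.mul_mem_left _ hx, hF _ _ _ hx', hc r x⟩ }
      monotone' := by
        rintro m n hmn _ ⟨x, hx, hx', rfl⟩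
        exact ⟨x, hx, F.monotone hmn hx', rfl⟩ }
  have hL : ∀ d a, a ∈ L d ↔ ∃ x ∈ I, x ∈ F d ∧ c x = a := fun d a => Iff.rfl
  have hgen : ∀ d, ∃ e ∈ L d, ∀ a ∈ L d, a * e = a := by
    intro d
    obtain ⟨e, he, hLe⟩ := IsSemisimpleRing.ideal_eq_span_idempotent (L d)
    refine ⟨e, hLe ▸ Ideal.mem_span_singleton_self e, fun a ha => ?_⟩
    rw [hLe, Ideal.mem_span_singleton'] at ha
    obtain ⟨b, rfl⟩ := ha
    rw [mul_assoc, he.eq]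
  -- The map `a ↦ i a * h` is a section of `c` on each `L j`, with values in `I ∩ F j`. A section on
  -- `L d` extends to `L (d + 1)` by splitting `a` as `a * e + a * (1 - e)`, where `L d = R e`.
  have hsec : ∀ d, ∃ h, ∀ j ≤ d, ∀ a ∈ L j, i a * h ∈ I ∧ i a * h ∈ F j ∧ c (i a * h) = a := by
    intro d
    induction d with
    | zero =>
      obtain ⟨e, he, hLe⟩ := hgen 0
      obtain ⟨x, hxI, hxF, hx⟩ := (hL _ _).1 he
      refine ⟨x, fun j hj a ha => ?_⟩
      obtain rfl : j = 0 := by omega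
      exact ⟨I.mul_mem_left _ hxI, hF _ _ _ hxF, by rw [hc, hx, hLe a ha]⟩
    | succ d ih =>
      obtain ⟨h, hh⟩ := ih
      obtain ⟨e, he, hLe⟩ := hgen d
      obtain ⟨e', he', hLe'⟩ := hgen (d + 1)
      obtain ⟨x, hxI, hxF, hx⟩ := (hL _ _).1 he'
      refine ⟨i e * h + i (1 - e) * x, fun j hj a ha => ?_⟩
      have hsplit : i a * (i e * h + i (1 - e) * x) = i (a * e) * h + i (a - a * e) * x := by
        simp only [map_sub, map_mul, map_one]; noncomm_ring
      rw [hsplit]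
      rcases Nat.lt_or_ge d j with hj' | hj'
      · obtain rfl : j = d + 1 := by omega
        have hae : a * e ∈ L d := (L d).mul_mem_left a he
        obtain ⟨h1, h2, h3⟩ := hh d le_rfl _ hae
        refine ⟨I.add_mem h1 (I.mul_mem_left _ hxI),
          add_mem (F.monotone (Nat.le_succ d) h2) (hF _ _ _ hxF), ?_⟩
        rw [map_add, h3, hc, hx, hLe' _ (sub_mem ha (L.monotone (Nat.le_succ d) hae))]
        abel
      · have : a * e = a := hLe a (L.monotone hj' ha)
        simpa [this] using hh j hj' a ha
  obtain ⟨m, hm⟩ := monotone_stabilizes_iff_noetherian.mpr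
    (inferInstance : IsNoetherian R R) L
  obtain ⟨h, hh⟩ := hsec m
  obtain ⟨e, he, hLe⟩ := hgen m
  have hsub : ∀ d, ∀ x ∈ I, x ∈ F d → ∃ y ∈ Ideal.span {i e * h}, x - y ∈ I ∧ x - y ∈ F d ∧
      c (x - y) = 0 := by
    intro d x hxI hxF
    have hd : c x ∈ L d := ⟨x, hxI, hxF, rfl⟩
    have hdm : c x ∈ L m := by
      rcases le_total d m with hdm | hdm
      · exact L.monotone hdm hd
      · rwa [hm d hdm]
    obtain ⟨j, hjm, hjd, hj⟩ : ∃ j ≤ m, j ≤ d ∧ c x ∈ L j := by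
      rcases le_total d m with hdm' | hdm'
      · exact ⟨d, hdm', le_rfl, hd⟩
      · exact ⟨m, le_rfl, hdm', hdm⟩
    obtain ⟨h1, h2, h3⟩ := hh j hjm _ hj
    refine ⟨i (c x) * h, ?_, I.sub_mem hxI h1, sub_mem hxF (F.monotone hjd h2), ?_⟩
    · rw [← hLe _ hdm, map_mul, mul_assoc]
      exact Ideal.mul_mem_left _ _ (Ideal.mem_span_singleton_self _)
    · rw [map_sub, h3, sub_self]
  have hmem : ∀ d, ∀ x ∈ I, x ∈ F d → x ∈ Ideal.span {i e * h} := by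
    intro d
    induction d with
    | zero =>
      intro x hxI hxF
      obtain ⟨y, hy, -, h2, h3⟩ := hsub 0 x hxI hxF
      rwa [sub_eq_zero.1 (h0 _ h2 h3)]
    | succ d ih =>
      intro x hxI hxF
      obtain ⟨y, hy, h1, h2, h3⟩ := hsub _ x hxI hxF
      have h4 := Ideal.mul_mem_left _ (↑t⁻¹ : S) (ih _ (I.mul_mem_left t h1) (hs _ _ h2 h3))
      rw [Units.inv_mul_cancel_left] at h4
      simpa using add_mem h4 hy
  refine ⟨i e * h, le_antisymm (fun x hx => ?_) ?_⟩
  · obtain ⟨u, d, hud⟩ := hex x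
    have := Ideal.mul_mem_left _ (↑u⁻¹ : S) (hmem d _ (I.mul_mem_left _ hx) hud)
    simpa using this
  · rw [Ideal.submodule_span_eq, Ideal.span_singleton_le_iff_mem]
    exact (hh m le_rfl e he).1

/-- A finite-by-infinite-cyclic group has a principal ideal group algebra in characteristic zero. -/
theorem isPrincipalIdealRing_of_finite_ker [CharZero K] (φ : G →* Multiplicative ℤ)
    (hφ : Function.Surjective φ) [Finite φ.ker] : IsPrincipalIdealRing (MonoidAlgebra K G) := by
  let deg : G → ℤ := fun g => (φ g).toAdd
  have deg_mul : ∀ g h, deg (g * h) = deg g + deg h := fun g h => by simp [deg]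
  have deg_inv : ∀ g, deg g⁻¹ = -deg g := fun g => by simp [deg]
  have deg_ker : ∀ g, g ∈ φ.ker ↔ deg g = 0 := fun g => by simp [deg, MonoidHom.mem_ker]
  let F : ℕ →o AddSubgroup (MonoidAlgebra K G) :=
    { toFun d :=
        { carrier := {x | ∀ g, ¬ (-(d : ℤ) ≤ deg g ∧ deg g ≤ 0) → x.coeff g = 0}
          zero_mem' := fun g _ => rfl
          add_mem' := fun {x y} hx hy g hg => by simp [hx g hg, hy g hg]
          neg_mem' := fun {x} hx g hg => by simp [hx g hg] }
      monotone' := fun m n hmn x hx g hg => hx g (by omega) }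
  have hFmem : ∀ d x, x ∈ F d ↔ ∀ g, ¬ (-(d : ℤ) ≤ deg g ∧ deg g ≤ 0) → x.coeff g = 0 :=
    fun d x => Iff.rfl
  obtain ⟨t, ht⟩ := hφ (.ofAdd 1)
  have deg_t : deg t = 1 := by simp [deg, ht]
  have : NeZero (Nat.card φ.ker : K) := ⟨Nat.cast_ne_zero.2 Nat.card_pos.ne'⟩
  let i := mapDomainRingHom K φ.ker.subtype
  let c := comapDomainAddMonoidHom (R := K) φ.ker.subtype φ.ker.subtype_injective
  have hcc : ∀ x n, (c x).coeff n = x.coeff n := fun x n => rfl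
  have hc0 : ∀ x, c x = 0 → ∀ g, deg g = 0 → x.coeff g = 0 := by
    intro x hx g hg
    rw [← hcc x ⟨g, (deg_ker g).2 hg⟩, hx]
    rfl
  refine isPrincipalIdealRing_of_filtration i c ?_ F ?_ (Units.map (of K G) (toUnits t)) ?_ ?_ ?_
  · intro r x
    induction r using MonoidAlgebra.induction_linear with
    | zero => simp
    | add r s hr hs => simp only [map_add, add_mul, hr, hs]
    | single n k =>
      ext m
      rw [hcc]
      simp [i, hcc]
  · intro d r x hx
    induction r using MonoidAlgebra.induction_linear with
    | zero => simp
    | add r s hr hs => simpa only [map_add, add_mul] using add_mem hr hs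
    | single n k =>
      rw [hFmem] at hx ⊢
      intro g hg
      have hn := (deg_ker _).1 n.2
      have := hx ((n : G)⁻¹ * g) (by rwa [deg_mul, deg_inv, hn, neg_zero, zero_add])
      simp [i, this]
  · intro x hx hcx
    ext g
    by_cases hg : deg g = 0
    · exact hc0 x hcx g hg
    · exact hx g (by simp; omega)
  · intro d x hx hcx
    rw [hFmem] at hx ⊢
    intro g hg
    have hdeg : deg (t⁻¹ * g) = deg g - 1 := by rw [deg_mul, deg_inv, deg_t]; ring
    have : x.coeff (t⁻¹ * g) = 0 := by
      by_cases hg' : deg g = 1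
      · exact hc0 x hcx _ (by omega)
      · exact hx _ (by rw [hdeg]; push_cast; omega)
    simp [this]
  · intro x
    obtain ⟨m, hm⟩ : ∃ m : ℕ, ∀ g ∈ x.coeff.support, (deg g).natAbs ≤ m :=
      ⟨x.coeff.support.sup fun g => (deg g).natAbs,
        fun g hg => Finset.le_sup (f := fun g => (deg g).natAbs) hg⟩
    refine ⟨Units.map (of K G) (toUnits (t ^ m)⁻¹), 2 * m, ?_⟩
    rw [hFmem]
    intro g hg
    have hdeg : deg (t ^ m * g) = m + deg g := by
      rw [deg_mul]; simp [deg, ht]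
    have : x.coeff (t ^ m * g) = 0 := by
      by_contra h
      have := hm _ (Finsupp.mem_support_iff.2 h)
      push_cast at hg
      omega
    simp [this]

end GroupAlgebraPIR

/-- Let `K` be a field of characteristic `0` and `G` a group.  Then the group algebra
`KG` is a principal ideal ring if and only if either `G` is finite, or there exists a
finite normal subgroup `N` of `G` such that `G/N` is infinite cyclic. -/
theorem monoidAlgebra_isPrincipalIdealRing_iff_char_zero
    (K G : Type*) [Field K] [CharZero K] [Group G] :
    IsPrincipalIdealRing (MonoidAlgebra K G) ↔
      (Finite G ∨ ∃ (N : Subgroup G) (_ : N.Normal), Finite N ∧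
        Nonempty ((G ⧸ N) ≃* Multiplicative ℤ)) := by
  constructor
  · intro hP
    rcases finite_or_infinite G with hG | hG
    · exact .inl hG
    obtain ⟨x, hx⟩ := GroupAlgebraPIR.exists_generator
      (GroupAlgebraPIR.aug K G : MonoidAlgebra K G →+* K)
    obtain ⟨φ, hφ⟩ := GroupAlgebraPIR.exists_surjective_int hx
    exact .inr ⟨φ.ker, inferInstance, GroupAlgebraPIR.finite_ker hx hφ,
      ⟨QuotientGroup.quotientKerEquivOfSurjective φ hφ⟩⟩
  · rintro (hG | ⟨N, hN, hfin, ⟨e⟩⟩)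
    · have : NeZero (Nat.card G : K) := ⟨Nat.cast_ne_zero.2 Nat.card_pos.ne'⟩
      refine ⟨fun I => ?_⟩
      obtain ⟨e, -, he⟩ := IsSemisimpleRing.ideal_eq_span_idempotent I
      exact ⟨e, he⟩
    · have hker : (e.toMonoidHom.comp (QuotientGroup.mk' N)).ker = N := by
        ext g
        simp
      have : Finite (e.toMonoidHom.comp (QuotientGroup.mk' N)).ker := by rwa [hker]
      exact GroupAlgebraPIR.isPrincipalIdealRing_of_finite_ker
        (e.toMonoidHom.comp (QuotientGroup.mk' N))
        (e.surjective.comp (QuotientGroup.mk'_surjective N))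
end
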